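/- arXiv:2509.24787 — 3 statements merged into one kernel-verified Lean document; each statement's English description precedes it below -/
import Mathlib

section
/- For every n ∈ ℕ and every integer p with p ≤ n, the set of pre-Q-trees of degree n+1 and base-length p is finite of cardinality catalan(n)·binom(2n−p, n−p); moreover, for every integer p > n the set of pre-Q-trees of degree n+1 and base-length p is empty. -/
/-!
Negating leaf labels turns a pre-Q-tree of degree `n + 1` into a binary tree with `n` internal
nodes together with a list of `n + 1` natural numbers (the negated leaf labels, from left to
right). Every internal label is determined by the leaves below it, and summing the node relation
`a = a_L + a_R + 1` over the tree gives `p = n - (sum of the list)` for the root label `p`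
(`PreQTree.label_eq`). Hence there is no such tree when `p > n`. When `p ≤ n` the correspondence
is a bijection onto pairs of a binary tree with `n` internal nodes and a list of length `n + 1`
with sum `n - p` (`PreQTree.eq_of_shape_leaves`, `PreQTree.exists_of_shape_leaves`). There are
`catalan n` such binary trees, and stars and bars counts the lists
(`card_list_length_sum`).
-/

/-- A pre-Q-tree with root-edge label `a : ℤ`: either a leaf carrying a label `a ≤ 0`, or a
node carrying a label `a` together with two pre-Q-tree children with labels `aL`, `aR`
satisfying `aL + aR = a - 1`. -/
inductive PreQTree : ℤ → Type
  | leaf (a : ℤ) (h : a ≤ 0) : PreQTree a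
  | node (a aL aR : ℤ) (h : aL + aR = a - 1)
      (l : PreQTree aL) (r : PreQTree aR) : PreQTree a

/-- The degree of a pre-Q-tree is its number of leaves. -/
def PreQTree.degree : {a : ℤ} → PreQTree a → ℕ
  | _, .leaf _ _ => 1
  | _, .node _ _ _ _ l r => l.degree + r.degree

namespace PreQTree

/-- The underlying binary tree of a pre-Q-tree; its leaves become `BinaryTree.nil`. -/
def shape : {a : ℤ} → PreQTree a → BinaryTree Unit
  | _, .leaf _ _ => .nil
  | _, .node _ _ _ _ l r => .node () l.shape r.shape

/-- The negated leaf labels, from left to right. Since leaf labels are nonpositive, `Int.toNat`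
loses no information here. -/
def leaves : {a : ℤ} → PreQTree a → List ℕ
  | _, .leaf a _ => [(-a).toNat]
  | _, .node _ _ _ _ l r => l.leaves ++ r.leaves

theorem degree_eq {a : ℤ} (T : PreQTree a) : T.degree = T.shape.numNodes + 1 := by
  induction T with
  | leaf => rfl
  | node a aL aR h l r ihl ihr =>
    simp only [degree, shape, BinaryTree.numNodes]
    omega

theorem length_leaves {a : ℤ} (T : PreQTree a) : T.leaves.length = T.shape.numNodes + 1 := by
  induction T with
  | leaf => rfl
  | node a aL aR h l r ihl ihr =>
    simp only [leaves, shape, BinaryTree.numNodes, List.length_append]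
    omega

theorem label_eq {a : ℤ} (T : PreQTree a) :
    a = (T.shape.numNodes : ℤ) - (T.leaves.sum : ℕ) := by
  induction T with
  | leaf a h => simp [leaves, shape]; omega
  | node a aL aR h l r ihl ihr =>
    simp only [leaves, shape, BinaryTree.numNodes, List.sum_append]
    omega

/-- A pre-Q-tree is determined by its shape and its leaf labels. The base-lengths are not assumed
equal, so that the induction can compare children whose labels are not yet known to agree. -/
theorem eq_of_shape_leaves {a : ℤ} (T : PreQTree a) :
    ∀ {b : ℤ} (S : PreQTree b), T.shape = S.shape → T.leaves = S.leaves → a = b ∧ T ≍ S := by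
  induction T with
  | leaf a h =>
    intro b S hs hl
    cases S with
    | leaf _ h' =>
      simp only [leaves, List.cons.injEq, and_true] at hl
      obtain rfl : a = b := by omega
      exact ⟨rfl, HEq.rfl⟩
    | node => simp [shape] at hs
  | node a aL aR h l r ihl ihr =>
    intro b S hs hl
    cases S with
    | leaf => simp [shape] at hs
    | node _ bL bR h' l' r' =>
      simp only [shape, BinaryTree.node.injEq, true_and] at hs
      simp only [leaves] at hl
      -- Equal shapes force the two concatenations to split at the same position.
      have hlen : l.leaves.length = l'.leaves.length := by
        rw [length_leaves, length_leaves, hs.1]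
      obtain ⟨h1, h2⟩ := List.append_inj hl hlen
      obtain ⟨rfl, el⟩ := ihl l' hs.1 h1
      obtain ⟨rfl, er⟩ := ihr r' hs.2 h2
      obtain rfl : a = b := by omega
      obtain rfl := eq_of_heq el
      obtain rfl := eq_of_heq er
      exact ⟨rfl, HEq.rfl⟩

theorem exists_of_shape_leaves (t : BinaryTree Unit) :
    ∀ (L : List ℕ) (a : ℤ), L.length = t.numNodes + 1 → a = (t.numNodes : ℤ) - (L.sum : ℕ) →
      ∃ T : PreQTree a, T.shape = t ∧ T.leaves = L := by
  induction t with
  | nil =>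
    intro L a hL ha
    obtain ⟨x, rfl⟩ := List.length_eq_one_iff.mp hL
    simp only [BinaryTree.numNodes, List.sum_singleton] at ha
    refine ⟨.leaf a (by omega), rfl, ?_⟩
    simp only [leaves, List.cons.injEq, and_true]
    omega
  | node v l r ihl ihr =>
    intro L a hL ha
    simp only [BinaryTree.numNodes] at hL ha
    obtain ⟨Tl, hl, hl'⟩ := ihl (L.take (l.numNodes + 1)) _ (by simp; omega) rfl
    obtain ⟨Tr, hr, hr'⟩ := ihr (L.drop (l.numNodes + 1)) _ (by simp; omega) rfl
    have hsum := congrArg List.sum (List.take_append_drop (l.numNodes + 1) L)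
    rw [List.sum_append] at hsum
    refine ⟨.node a _ _ (by omega) Tl Tr, ?_, ?_⟩
    · simp [shape, hl, hr]
    · simp [leaves, hl', hr']

/-- Pre-Q-trees of degree `n + 1` and base-length `n - k` correspond to pairs of a binary tree
with `n` internal nodes and a list of `n + 1` natural numbers with sum `k`. -/
noncomputable def equivShapeLeaves (n k : ℕ) (p : ℤ) (hp : p = (n : ℤ) - k) :
    {T : PreQTree p // T.degree = n + 1} ≃
      {t // t ∈ BinaryTree.treesOfNumNodesEq n} ×
        {L : List ℕ // L.length = n + 1 ∧ L.sum = k} :=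
  Equiv.ofBijective
    (fun T =>
      have hn : T.1.shape.numNodes = n := by
        have := T.1.degree_eq
        have := T.2
        omega
      (⟨T.1.shape, BinaryTree.mem_treesOfNumNodesEq.mpr hn⟩,
        ⟨T.1.leaves, by rw [length_leaves, hn], by have := T.1.label_eq; omega⟩)) <| by
    constructor
    · rintro ⟨T, hT⟩ ⟨S, hS⟩ h
      simp only [Prod.mk.injEq, Subtype.mk.injEq] at h
      exact Subtype.ext (eq_of_heq (eq_of_shape_leaves T S h.1 h.2).2)
    · rintro ⟨⟨t, ht⟩, ⟨L, hL, hk⟩⟩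
      rw [BinaryTree.mem_treesOfNumNodesEq] at ht
      obtain ⟨T, rfl, rfl⟩ := exists_of_shape_leaves t L p (by omega) (by omega)
      exact ⟨⟨T, by rw [degree_eq, ht]⟩, rfl⟩

end PreQTree

/-- Lists of `m` natural numbers with sum `k` are multisets of size `k` on `m` elements. -/
noncomputable def symEquivList (m k : ℕ) :
    Sym (Fin m) k ≃ {L : List ℕ // L.length = m ∧ L.sum = k} :=
  (Sym.equivNatSumOfFintype (Fin m) k).trans <|
    Equiv.ofBijective
      (fun P => ⟨List.ofFn P.1, by simp, by rw [List.sum_ofFn]; exact P.2⟩) <| by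
      constructor
      · rintro ⟨P, hP⟩ ⟨Q, hQ⟩ h
        simp only [Subtype.mk.injEq] at h
        exact Subtype.ext (List.ofFn_injective h)
      · rintro ⟨L, rfl, rfl⟩
        refine ⟨⟨L.get, ?_⟩, Subtype.ext (List.ofFn_get L)⟩
        rw [← List.sum_ofFn, List.ofFn_get]

theorem card_list_length_sum (n k : ℕ) :
    Nat.card {L : List ℕ // L.length = n + 1 ∧ L.sum = k} = (n + k).choose k := by
  rw [← Nat.card_congr (symEquivList (n + 1) k), Nat.card_eq_fintype_card,
    Sym.card_sym_eq_choose, Fintype.card_fin]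
  congr 1
  omega

/-- for every `n : ℕ` and integer `p ≤ n`, the set of pre-Q-trees of degree
`n+1` and base-length `p` is finite of cardinality `catalan n * (2n-p choose n-p)`;
for every integer `p > n` it is empty. -/
theorem stmt3 (n : ℕ) (p : ℤ) :
    ((p ≤ (n : ℤ)) →
      Finite {T : PreQTree p // T.degree = n + 1} ∧
      Nat.card {T : PreQTree p // T.degree = n + 1}
        = catalan n * Nat.choose (2 * (n : ℤ) - p).toNat ((n : ℤ) - p).toNat) ∧
    (((n : ℤ) < p) → IsEmpty {T : PreQTree p // T.degree = n + 1}) := by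
  refine ⟨fun hp => ?_, fun hp => ⟨fun T => ?_⟩⟩
  · obtain ⟨k, hk⟩ := Int.eq_ofNat_of_zero_le (sub_nonneg.mpr hp)
    have e := PreQTree.equivShapeLeaves n k p (by omega)
    have : Finite {L : List ℕ // L.length = n + 1 ∧ L.sum = k} :=
      Finite.of_equiv _ (symEquivList (n + 1) k)
    refine ⟨Finite.of_equiv _ e.symm, ?_⟩
    rw [Nat.card_congr e, Nat.card_prod, card_list_length_sum, Nat.card_eq_fintype_card,
      Fintype.card_coe, BinaryTree.treesOfNumNodesEq_card_eq_catalan]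
    congr 2 <;> omega
  · have h1 := T.1.label_eq
    have h2 := T.1.degree_eq
    have h3 := T.2
    omega
end

section
/- For every natural number m, the sum over all partitions λ of m of ∏_k 1/(k^{m_k(λ)} · m_k(λ)!) equals 1 in ℚ, where m_k(λ) denotes the number of parts of λ equal to k and the product runs over the distinct part sizes k occurring in λ. Equivalently: the sum over all finitely supported sequences (n_k)_{k≥1} of natural numbers satisfying ∑_{k≥1} k·n_k = m of ∏_{k≥1} 1/(k^{n_k} · n_k!) equals 1. -/
/-!
This is the class equation of the symmetric group on `m` letters. The permutations whose cycle
lengths, fixed points included as parts equal to `1`, form the partition `P` are `m! / z_P` in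
number, where `z_P = ∏ k ^ m_k * m_k!`. Mathlib's `Equiv.Perm.card_of_cycleType_mul_eq` gives this
count in terms of the parts of size at least `2`; `zee_eq` restores the parts equal to `1`.
Summing over `P` counts every permutation once, so `∑ m! / z_P = m!`.
-/

/-- The full cycle type of a permutation of `Fin m`, as a partition of `m`. This is
`Equiv.Perm.partition` with `Fintype.card (Fin m)` replaced by `m`. -/
def permPartition (m : ℕ) (σ : Equiv.Perm (Fin m)) : Nat.Partition m where
  parts := σ.partition.parts
  parts_pos := σ.partition.parts_pos
  parts_sum := by rw [σ.partition.parts_sum, Fintype.card_fin]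

/-- A partition of `m` is recovered from its parts of size at least `2` by adding parts equal
to `1` until the sum is `m`. -/
lemma parts_eq_filter_add (m : ℕ) (P : Nat.Partition m) :
    (P.parts.filter (2 ≤ ·)).sum ≤ m ∧
    P.parts = P.parts.filter (2 ≤ ·) +
      Multiset.replicate (m - (P.parts.filter (2 ≤ ·)).sum) 1 := by
  have h1 := Multiset.filter_add_not (2 ≤ ·) P.parts
  have h2 : P.parts.filter (fun k => ¬ 2 ≤ k) =
      Multiset.replicate (P.parts.filter (fun k => ¬ 2 ≤ k)).card 1 := by
    refine Multiset.eq_replicate_card.2 fun b hb => ?_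
    rw [Multiset.mem_filter] at hb
    have := P.parts_pos hb.1
    omega
  have h3 := P.parts_sum
  rw [← h1, Multiset.sum_add] at h3
  rw [h2, Multiset.sum_replicate, smul_eq_mul, mul_one] at h3
  refine ⟨by omega, ?_⟩
  have h4 : m - (P.parts.filter (2 ≤ ·)).sum = (P.parts.filter (fun k => ¬ 2 ≤ k)).card := by
    omega
  rw [h4, ← h2]
  exact h1.symm

lemma zee_eq (c : Multiset ℕ) (hc : ∀ a ∈ c, 2 ≤ a) (r : ℕ) :
    ∏ k ∈ (c + Multiset.replicate r 1).toFinset,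
      (k ^ (c + Multiset.replicate r 1).count k *
        ((c + Multiset.replicate r 1).count k).factorial) =
    r.factorial * c.prod * ∏ k ∈ c.toFinset, (c.count k).factorial := by
  have h1 : 1 ∉ c := fun h => by simpa using hc 1 h
  -- Enlarging the index set by `1` is harmless: if `r = 0` the new factor is `1 ^ 0 * 0! = 1`.
  have hsub : (c + Multiset.replicate r 1).toFinset ⊆ insert 1 c.toFinset := by
    intro k hk
    simp only [Multiset.mem_toFinset, Multiset.mem_add, Finset.mem_insert] at hk ⊢
    rcases hk with hk | hk
    · exact Or.inr hk
    · exact Or.inl (Multiset.eq_of_mem_replicate hk)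
  rw [Finset.prod_subset hsub, Finset.prod_insert (by simpa using h1)]
  · have : ∀ k ∈ c.toFinset, (k ^ (c + Multiset.replicate r 1).count k *
        ((c + Multiset.replicate r 1).count k).factorial) =
        k ^ c.count k * (c.count k).factorial := by
      intro k hk
      have : k ≠ 1 := by
        rintro rfl
        exact h1 (Multiset.mem_toFinset.1 hk)
      simp [Multiset.count_replicate, this.symm]
    rw [Finset.prod_congr rfl this, Finset.prod_mul_distrib, ← Finset.prod_multiset_count]
    simp [Multiset.count_eq_zero_of_notMem h1, mul_assoc]
  · intro k _ hk
    rw [Multiset.mem_toFinset] at hk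
    simp [Multiset.count_eq_zero_of_notMem hk]

/-- The orbit-stabilizer count: `m! / z_P` permutations have full cycle type `P`. -/
lemma card_permPartition_mul (m : ℕ) (P : Nat.Partition m) :
    (Finset.univ.filter fun σ : Equiv.Perm (Fin m) => permPartition m σ = P).card *
      ∏ k ∈ P.parts.toFinset, (k ^ P.parts.count k * (P.parts.count k).factorial) =
    m.factorial := by
  obtain ⟨hle, hP⟩ := parts_eq_filter_add m P
  have hc : ∀ a ∈ P.parts.filter (2 ≤ ·), 2 ≤ a := fun a ha => (Multiset.mem_filter.1 ha).2
  have key : ∀ σ : Equiv.Perm (Fin m),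
      permPartition m σ = P ↔ σ.cycleType = P.parts.filter (2 ≤ ·) := by
    intro σ
    have hσ : (permPartition m σ).parts.filter (2 ≤ ·) = σ.cycleType :=
      Equiv.Perm.filter_parts_partition_eq_cycleType
    refine ⟨fun h => by rw [← hσ, h], fun h => ?_⟩
    rw [Nat.Partition.ext_iff, (parts_eq_filter_add m (permPartition m σ)).2, hσ, h]
    exact hP.symm
  have hcard := Equiv.Perm.card_of_cycleType_mul_eq (Fin m) (P.parts.filter (2 ≤ ·))
  rw [if_pos ⟨by simpa using hle, hc⟩, Fintype.card_fin] at hcard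
  rw [Finset.filter_congr fun σ _ => key σ]
  have hz := zee_eq _ hc (m - (P.parts.filter (2 ≤ ·)).sum)
  rw [← hP] at hz
  rw [hz, hcard]


/-- for every natural number `m`, the sum over all partitions `λ` of `m` of
`∏_k 1 / (k ^ m_k(λ) * m_k(λ)!)` equals `1` in `ℚ`, where `m_k(λ)` is the number of parts
of `λ` equal to `k` and the product runs over the distinct part sizes occurring in `λ`. -/
theorem stmt4 (m : ℕ) :
    ∑ P : Nat.Partition m,
      ∏ k ∈ P.parts.toFinset,
        (1 / ((k : ℚ) ^ (Multiset.count k P.parts) *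
          ((Multiset.count k P.parts).factorial : ℚ))) = 1 := by
  have hm : (m.factorial : ℚ) ≠ 0 := by exact_mod_cast m.factorial_ne_zero
  have hterm : ∀ P : Nat.Partition m,
      ∏ k ∈ P.parts.toFinset,
        (1 / ((k : ℚ) ^ (Multiset.count k P.parts) *
          ((Multiset.count k P.parts).factorial : ℚ))) =
      ((Finset.univ.filter fun σ : Equiv.Perm (Fin m) => permPartition m σ = P).card : ℚ) /
        m.factorial := by
    intro P
    have h := card_permPartition_mul m P
    have hne := m.factorial_ne_zero
    rw [← h] at hne
    have hz := right_ne_zero_of_mul hne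
    have h' := congrArg (Nat.cast : ℕ → ℚ) h
    have hz' := (Nat.cast_ne_zero (R := ℚ)).2 hz
    push_cast at h' hz'
    rw [Finset.prod_div_distrib, Finset.prod_const_one, div_eq_div_iff hz' hm, one_mul, h']
  rw [Finset.sum_congr rfl fun P _ => hterm P, ← Finset.sum_div, div_eq_one_iff_eq hm,
    ← Nat.cast_sum,
    ← Finset.card_eq_sum_card_fiberwise (fun σ _ => Finset.mem_coe.2 (Finset.mem_univ _)),
    Finset.card_univ, Fintype.card_perm, Fintype.card_fin]
end

section
/- For all natural numbers i and n with i ≤ n, (n+1) · ∑ ∏_{j=1}^{i+1} catalan(n_j) = (i+1) · binom(2n−i, n), where the sum runs over all (i+1)-tuples (n_1, …, n_{i+1}) of natural numbers with n_1 + ⋯ + n_{i+1} = n − i. -/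
/-!
The sum over tuples is the coefficient of `X ^ (n - i)` in the `(i + 1)`-st power of the Catalan
generating function `C`. Since `C = 1 + X C²`, we have `C ^ (k + 1) = C ^ k + X C ^ (k + 2)`, and this
recurrence, by induction on the degree `m` and then on the exponent `k`, gives the ballot formula
`(2m + k) [X ^ m] C ^ k = k * binom (2m + k, m)` (`catalan_pow_coeff`). With `k = i + 1` and
`m = n - i` this is the claim, up to one absorption identity for binomial coefficients.
-/

open PowerSeries in
lemma sum_antidiagonalTuple_catalan (k m : ℕ) :
    ∑ t ∈ Finset.Nat.antidiagonalTuple k m, ∏ j, catalan (t j)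
      = coeff m (catalanSeries ^ k) := by
  have hpow : catalanSeries ^ k = ∏ _j : Fin k, catalanSeries := by simp
  rw [hpow, coeff_prod]
  refine Finset.sum_bij' (fun t _ => Finsupp.equivFunOnFinite.symm t) (fun f _ => ⇑f)
    ?_ ?_ ?_ ?_ ?_
  · intro t ht
    simpa [Finset.mem_finsuppAntidiag, Finset.Nat.mem_antidiagonalTuple] using ht
  · intro f hf
    simpa [Finset.mem_finsuppAntidiag, Finset.Nat.mem_antidiagonalTuple] using hf
  · intro t _
    rfl
  · intro f _
    ext
    rfl
  · intro t _
    simp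

open PowerSeries in
lemma catalan_pow_coeff_succ (k m : ℕ) :
    coeff (m + 1) (catalanSeries ^ (k + 1))
      = coeff (m + 1) (catalanSeries ^ k) + coeff m (catalanSeries ^ (k + 2)) := by
  have hC : catalanSeries ^ (k + 1) = catalanSeries ^ k + catalanSeries ^ (k + 2) * X := by
    calc catalanSeries ^ (k + 1)
        = catalanSeries ^ k * (catalanSeries ^ 2 * X + 1) := by
          rw [catalanSeries_sq_mul_X_add_one, pow_succ]
      _ = catalanSeries ^ k + catalanSeries ^ (k + 2) * X := by ring
  rw [hC, map_add, coeff_succ_mul_X]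

open PowerSeries in
/-- The ballot formula for the coefficients of powers of the Catalan series, in a form free of
division and subtraction. -/
lemma catalan_pow_coeff (m k : ℕ) :
    (2 * m + k) * coeff m (catalanSeries ^ k) = k * Nat.choose (2 * m + k) m := by
  induction m generalizing k with
  | zero => simp
  | succ m ihm =>
    induction k with
    | zero => simp [coeff_one]
    | succ k ihk =>
      have h2 := ihm (k + 2)
      rw [catalan_pow_coeff_succ]
      rw [show 2 * (m + 1) + k = 2 * m + k + 2 by ring] at ihk
      rw [show 2 * m + (k + 2) = 2 * m + k + 2 by ring] at h2
      rw [show 2 * (m + 1) + (k + 1) = 2 * m + k + 2 + 1 by ring, Nat.choose_succ_succ]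
      have hc := Nat.choose_succ_right_eq (2 * m + k + 2) m
      rw [show 2 * m + k + 2 - m = m + k + 2 by omega] at hc
      generalize coeff (m + 1) (catalanSeries ^ k) = a at *
      generalize coeff m (catalanSeries ^ (k + 2)) = b at *
      simp only [Nat.succ_eq_add_one]
      generalize Nat.choose (2 * m + k + 2) (m + 1) = c at *
      generalize Nat.choose (2 * m + k + 2) m = d at *
      -- The two recurrence hypotheses carry the factor `2m + k + 2`, so it is cancelled at the end.
      apply Nat.eq_of_mul_eq_mul_left (show 0 < 2 * m + k + 2 by omega)
      zify at *
      linear_combination (2 * m + k + 2 + 1 : ℤ) * (ihk + h2) - 2 * hc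

/-- for all naturals `i ≤ n`,
`(n+1) * ∑ ∏_{j=1}^{i+1} catalan (n_j) = (i+1) * (2n-i choose n)`,
where the sum runs over all `(i+1)`-tuples `(n_1, …, n_{i+1})` of naturals summing
to `n - i`. -/
theorem stmt6 (i n : ℕ) (h : i ≤ n) :
    (n + 1) *
      ∑ t ∈ Finset.Nat.antidiagonalTuple (i + 1) (n - i), ∏ j, catalan (t j)
      = (i + 1) * Nat.choose (2 * n - i) n := by
  obtain ⟨m, rfl⟩ := Nat.exists_eq_add_of_le h
  rw [sum_antidiagonalTuple_catalan, Nat.add_sub_cancel_left,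
    show 2 * (i + m) - i = 2 * m + i by omega]
  have hb := catalan_pow_coeff m (i + 1)
  rw [show 2 * m + (i + 1) = 2 * m + i + 1 by ring] at hb
  -- Absorption: `(2m+i+1) * binom (2m+i, i+m) = (i+m+1) * binom (2m+i+1, i+m+1)`.
  have ha := Nat.add_one_mul_choose_eq (2 * m + i) (i + m)
  rw [Nat.choose_symm_of_eq_add (show 2 * m + i + 1 = (i + m + 1) + m by ring)] at ha
  apply Nat.eq_of_mul_eq_mul_left (show 0 < 2 * m + i + 1 by omega)
  zify at *
  linear_combination (i + m + 1 : ℤ) * hb - (i + 1 : ℤ) * ha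
end
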